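/- arXiv:2311.14879 — 3 statements merged into one kernel-verified Lean document; each statement's English description precedes it below -/
import Mathlib

section
/- For every natural number m, the real vector space of maps X : Fin m → Fin m → Fin m → Fin m → ℝ satisfying X_{abcd} = −X_{bacd}, X_{abcd} = −X_{abdc}, and X_{abcd} = X_{cdab} for all indices (the space Sym of symmetric (2,2) double forms) has dimension (m² − m)(m² − m + 2)/8. -/
noncomputable section

/-- The space of symmetric (2,2) double forms on an `m`-dimensional space:
maps `X` with `X_{abcd} = -X_{bacd}`, `X_{abcd} = -X_{abdc}` and `X_{abcd} = X_{cdab}`. -/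
def symDF (m : ℕ) : Submodule ℝ (Fin m → Fin m → Fin m → Fin m → ℝ) where
  carrier := {X | (∀ a b c d, X a b c d = -X b a c d) ∧
                  (∀ a b c d, X a b c d = -X a b d c) ∧
                  (∀ a b c d, X a b c d = X c d a b)}
  add_mem' := by
    intro X Y hX hY
    obtain ⟨hx1, hx2, hx3⟩ := hX
    obtain ⟨hy1, hy2, hy3⟩ := hY
    refine ⟨fun a b c d => ?_, fun a b c d => ?_, fun a b c d => ?_⟩ <;>
      simp only [Pi.add_apply]
    · rw [hx1 a b c d, hy1 a b c d]; ring
    · rw [hx2 a b c d, hy2 a b c d]; ring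
    · rw [hx3 a b c d, hy3 a b c d]
  zero_mem' := by
    refine ⟨fun a b c d => ?_, fun a b c d => ?_, fun a b c d => ?_⟩ <;> simp
  smul_mem' := by
    intro r X hX
    obtain ⟨h1, h2, h3⟩ := hX
    refine ⟨fun a b c d => ?_, fun a b c d => ?_, fun a b c d => ?_⟩ <;>
      simp only [Pi.smul_apply, smul_eq_mul]
    · rw [h1 a b c d]; ring
    · rw [h2 a b c d]; ring
    · rw [h3 a b c d]

/-- The index pairs `a < b`, labelling the basis of the antisymmetric 2-tensors. -/
abbrev IncPair (m : ℕ) : Type := {p : Fin m × Fin m // p.1 < p.2}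

/-- The antisymmetric extension to all pairs of a function on increasing pairs. -/
def antisymmExtend {m : ℕ} (g : IncPair m → ℝ) (a b : Fin m) : ℝ :=
  if h : a < b then g ⟨(a, b), h⟩ else if h : b < a then -g ⟨(b, a), h⟩ else 0

theorem antisymmExtend_swap {m : ℕ} (g : IncPair m → ℝ) (a b : Fin m) :
    antisymmExtend g a b = -antisymmExtend g b a := by
  rcases lt_trichotomy a b with h | rfl | h
  · simp [antisymmExtend, h, h.not_gt]
  · simp [antisymmExtend]
  · simp [antisymmExtend, h, h.not_gt]

theorem antisymmExtend_neg {m : ℕ} (g : IncPair m → ℝ) (a b : Fin m) :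
    antisymmExtend (fun p => -g p) a b = -antisymmExtend g a b := by
  unfold antisymmExtend
  split_ifs <;> simp

theorem antisymmExtend_apply {m : ℕ} (g : IncPair m → ℝ) (p : IncPair m) :
    antisymmExtend g p.1.1 p.1.2 = g p := by
  simp [antisymmExtend, p.2]

theorem antisymmExtend_comm {m : ℕ} (g : IncPair m → IncPair m → ℝ) (a b c d : Fin m) :
    antisymmExtend (fun p => antisymmExtend (g p) c d) a b =
      antisymmExtend (fun q => antisymmExtend (fun p => g p q) a b) c d := by
  unfold antisymmExtend
  split_ifs <;> simp

theorem antisymmExtend_restrict {m : ℕ} {X : Fin m → Fin m → ℝ} (hX : ∀ a b, X a b = -X b a)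
    (a b : Fin m) : antisymmExtend (fun p => X p.1.1 p.1.2) a b = X a b := by
  rcases lt_trichotomy a b with h | rfl | h
  · simp [antisymmExtend, h]
  · have := hX a a
    simp only [antisymmExtend, lt_irrefl, dite_false]
    linarith
  · simp [antisymmExtend, h, h.not_gt, hX a b]

/-- A symmetric double form is determined by its values on unordered pairs of increasing pairs,
which may be prescribed freely. -/
def symDFEquiv (m : ℕ) : symDF m ≃ₗ[ℝ] (Sym2 (IncPair m) → ℝ) where
  toFun X := Sym2.lift ⟨fun p q => X.1 p.1.1 p.1.2 q.1.1 q.1.2, fun _ _ => X.2.2.2 _ _ _ _⟩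
  map_add' X Y := by
    ext s
    induction s with | _ p q => simp
  map_smul' r X := by
    ext s
    induction s with | _ p q => simp
  invFun f := ⟨fun a b c d => antisymmExtend (fun p => antisymmExtend (fun q => f s(p, q)) c d) a b,
    fun _ _ _ _ => antisymmExtend_swap _ _ _,
    fun a b c d => by
      beta_reduce
      rw [← antisymmExtend_neg]
      congr 1
      funext p
      exact antisymmExtend_swap _ _ _,
    fun a b c d => by
      refine (antisymmExtend_comm _ a b c d).trans ?_
      beta_reduce
      congr 1
      funext q
      congr 1
      funext p
      rw [Sym2.eq_swap]⟩
  left_inv X := by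
    obtain ⟨X, h₁, h₂, h₃⟩ := X
    ext a b c d
    simp only [Sym2.lift_mk]
    simp only [antisymmExtend_restrict (h₂ _ _)]
    exact antisymmExtend_restrict (X := fun a b => X a b c d) (fun a b => h₁ a b c d) a b
  right_inv f := by
    ext s
    induction s with | _ p q => simp [antisymmExtend_apply]

theorem card_incPair (m : ℕ) : Fintype.card (IncPair m) = m.choose 2 := by
  rw [Fintype.card_subtype, Finset.card_filter, Fintype.sum_prod_type_right]
  simp only [← Finset.card_filter, Finset.filter_gt_eq_Iio, Fin.card_Iio]
  rw [Fin.sum_univ_eq_sum_range (fun i => i), Finset.sum_range_id, Nat.choose_two_right]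

/-- The space `Sym` of symmetric (2,2) double forms has dimension
`(m² − m)(m² − m + 2)/8`. -/
theorem dim_symDF (m : ℕ) :
    Module.finrank ℝ (symDF m) = (m ^ 2 - m) * (m ^ 2 - m + 2) / 8 := by
  rw [(symDFEquiv m).finrank_eq, Module.finrank_fintype_fun_eq_card, Sym2.card, card_incPair,
    Nat.choose_two_right (_ + 1), Nat.add_sub_cancel]
  have h : m ^ 2 - m = 2 * m.choose 2 := by
    rw [Nat.choose_two_right, Nat.mul_div_cancel' (Nat.even_mul_pred_self m).two_dvd,
      Nat.mul_sub_one, sq]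
  rw [h, show 2 * m.choose 2 * (2 * m.choose 2 + 2) = 4 * ((m.choose 2 + 1) * m.choose 2) by ring,
    show 8 = 4 * 2 from rfl, Nat.mul_div_mul_left _ _ (by norm_num)]
end
end

section
/- For every natural number m, the real vector space of maps X : Fin m → Fin m → Fin m → Fin m → ℝ satisfying X_{abcd} = −X_{bacd}, X_{abcd} = −X_{abdc}, and the first algebraic Bianchi identity X_{abcd} + X_{acdb} + X_{adbc} = 0 for all indices (the space Curv of algebraic curvature tensors) has dimension m²(m² − 1)/12. -/
noncomputable section

/-- The space of algebraic curvature tensors on an `m`-dimensional space: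
maps `X` with `X_{abcd} = -X_{bacd}`, `X_{abcd} = -X_{abdc}` and the first
algebraic Bianchi identity `X_{abcd} + X_{acdb} + X_{adbc} = 0`. -/
def curvDF (m : ℕ) : Submodule ℝ (Fin m → Fin m → Fin m → Fin m → ℝ) where
  carrier := {X | (∀ a b c d, X a b c d = -X b a c d) ∧
                  (∀ a b c d, X a b c d = -X a b d c) ∧
                  (∀ a b c d, X a b c d + X a c d b + X a d b c = 0)}
  add_mem' := by
    intro X Y hX hY
    obtain ⟨hx1, hx2, hx3⟩ := hX
    obtain ⟨hy1, hy2, hy3⟩ := hY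
    refine ⟨fun a b c d => ?_, fun a b c d => ?_, fun a b c d => ?_⟩ <;>
      simp only [Pi.add_apply]
    · rw [hx1 a b c d, hy1 a b c d]; ring
    · rw [hx2 a b c d, hy2 a b c d]; ring
    · have := hx3 a b c d
      have := hy3 a b c d
      linarith
  zero_mem' := by
    refine ⟨fun a b c d => ?_, fun a b c d => ?_, fun a b c d => ?_⟩ <;> simp
  smul_mem' := by
    intro r X hX
    obtain ⟨h1, h2, h3⟩ := hX
    refine ⟨fun a b c d => ?_, fun a b c d => ?_, fun a b c d => ?_⟩ <;>
      simp only [Pi.smul_apply, smul_eq_mul]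
    · rw [h1 a b c d]; ring
    · rw [h2 a b c d]; ring
    · linear_combination r * h3 a b c d
  
/-- The projection of all four-index arrays onto the algebraic curvature tensors: skew-symmetrize in
each pair of indices, symmetrize under exchange of the pairs, and subtract the totally
skew-symmetric part. -/
def curvProj (m : ℕ) : Module.End ℝ (Fin m → Fin m → Fin m → Fin m → ℝ) where
  toFun X a b c d :=
    (2 * (X a b c d - X b a c d - X a b d c + X b a d c
        + X c d a b - X d c a b - X c d b a + X d c b a)
      - (X a c d b - X c a d b - X a c b d + X c a b d
        + X d b a c - X b d a c - X d b c a + X b d c a)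
      - (X a d b c - X d a b c - X a d c b + X d a c b
        + X b c a d - X c b a d - X b c d a + X c b d a)) / 24
  map_add' X Y := by
    ext a b c d
    simp only [Pi.add_apply]
    ring
  map_smul' r X := by
    ext a b c d
    simp only [Pi.smul_apply, smul_eq_mul, RingHom.id_apply]
    ring

theorem curvProj_apply (m : ℕ) (X : Fin m → Fin m → Fin m → Fin m → ℝ) (a b c d : Fin m) :
    curvProj m X a b c d =
    (2 * (X a b c d - X b a c d - X a b d c + X b a d c
        + X c d a b - X d c a b - X c d b a + X d c b a)
      - (X a c d b - X c a d b - X a c b d + X c a b d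
        + X d b a c - X b d a c - X d b c a + X b d c a)
      - (X a d b c - X d a b c - X a d c b + X d a c b
        + X b c a d - X c b a d - X b c d a + X c b d a)) / 24 :=
  rfl

/-- Algebraic curvature tensors are symmetric under exchange of the two index pairs. -/
theorem curvDF_pair_symm {m : ℕ} {X : Fin m → Fin m → Fin m → Fin m → ℝ} (hX : X ∈ curvDF m)
    (a b c d : Fin m) : X a b c d = X c d a b := by
  obtain ⟨h₁, h₂, h₃⟩ := hX
  linarith [h₃ a b c d, h₃ b c d a, h₃ c d a b, h₃ d a b c, h₁ a b c d, h₂ a b c d, h₁ c d a b,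
    h₂ c d a b, h₁ a c d b, h₁ a c b d, h₂ a c d b, h₂ c a d b, h₁ b d a c, h₂ b d a c, h₁ b d c a,
    h₂ b a c d, h₂ d c a b, h₁ a d b c, h₂ a d b c, h₂ d a b c, h₁ b c d a, h₂ b c d a,
    h₂ c b d a]

theorem curvProj_isProj (m : ℕ) : LinearMap.IsProj (curvDF m) (curvProj m) where
  map_mem X := by
    refine ⟨fun a b c d => ?_, fun a b c d => ?_, fun a b c d => ?_⟩ <;>
      simp only [curvProj_apply] <;> ring
  map_id X hX := by
    ext a b c d
    have hs := curvDF_pair_symm hX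
    obtain ⟨h₁, h₂, h₃⟩ := hX
    have hskew : ∀ a b c d, X a b c d - X b a c d - X a b d c + X b a d c
        + X c d a b - X d c a b - X c d b a + X d c b a = 8 * X a b c d := fun a b c d => by
      linarith [h₁ a b c d, h₂ a b c d, h₂ b a c d, h₁ c d a b, h₂ c d a b, h₂ d c a b, hs a b c d]
    rw [curvProj_apply, hskew a b c d, hskew a c d b, hskew a d b c]
    linarith [h₃ a b c d]

/-- The trace of an endomorphism of the space of four-index arrays as a sum of its diagonal
entries. -/
theorem trace_fourIndex (m : ℕ) (f : Module.End ℝ (Fin m → Fin m → Fin m → Fin m → ℝ)) :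
    LinearMap.trace ℝ _ f = ∑ a, ∑ b, ∑ c, ∑ d,
      f (Pi.single a (Pi.single b (Pi.single c (Pi.single d 1)))) a b c d := by
  rw [LinearMap.trace_eq_matrix_trace ℝ (Pi.basis fun _ : Fin m => Pi.basis fun _ : Fin m =>
    Pi.basis fun _ : Fin m => Pi.basisFun ℝ (Fin m))]
  simp [Matrix.trace, Fintype.sum_sigma, LinearMap.toMatrix_apply, Pi.basis_apply, Pi.basis_repr]

theorem single_fourIndex_apply {m : ℕ} (a b c d a' b' c' d' : Fin m) :
    (Pi.single a (Pi.single b (Pi.single c (Pi.single d 1))) :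
      Fin m → Fin m → Fin m → Fin m → ℝ) a' b' c' d' =
      (if a' = a then 1 else 0) * (if b' = b then 1 else 0) * (if c' = c then 1 else 0) *
        (if d' = d then 1 else 0) := by
  by_cases ha : a' = a <;> by_cases hb : b' = b <;> by_cases hc : c' = c <;>
    by_cases hd : d' = d <;> simp [ha, hb, hc, hd]

theorem trace_curvProj (m : ℕ) :
    LinearMap.trace ℝ _ (curvProj m) = ((m : ℝ) ^ 4 - (m : ℝ) ^ 2) / 12 := by
  rw [trace_fourIndex]
  simp only [curvProj_apply, single_fourIndex_apply, ← Finset.sum_div]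
  simp [Finset.sum_add_distrib, Finset.sum_sub_distrib, ← Finset.mul_sum]
  ring

/-- The space `Curv` of algebraic curvature tensors has dimension `m²(m² − 1)/12`. -/
theorem dim_curvDF (m : ℕ) :
    Module.finrank ℝ (curvDF m) = m ^ 2 * (m ^ 2 - 1) / 12 := by
  have h : (Module.finrank ℝ (curvDF m) : ℝ) = ((m : ℝ) ^ 4 - (m : ℝ) ^ 2) / 12 := by
    rw [← (curvProj_isProj m).trace, trace_curvProj]
  have h' : 12 * Module.finrank ℝ (curvDF m) + m ^ 2 = m ^ 2 * m ^ 2 := by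
    have : (12 * Module.finrank ℝ (curvDF m) + m ^ 2 : ℝ) = m ^ 2 * m ^ 2 := by
      rw [h]; ring
    exact_mod_cast this
  rw [Nat.mul_sub, mul_one]
  omega
end
end

section
/- (Generalised Ruse–Lanczos identity) Let X be a (2,2) double form on 4-dimensional Minkowski space. Then for all a,b,c,d: ⋆⋆X_{abcd} + X_{cdab} = η_{ac} X̂_{db} − η_{ad} X̂_{cb} + η_{bd} X̂_{ca} − η_{bc} X̂_{da}, where ⋆⋆X_{abcd} = (1/4) ε_{ab}{}^{pq} ε_{cd}{}^{rs} X_{pqrs} is the double Hodge dual. -/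
noncomputable section

/-- The Minkowski metric `η = diag(+1,−1,−1,−1)` on `ℝ⁴`.  Its inverse has the
same components, so `mink` is also used to raise indices. -/
def mink : Fin 4 → Fin 4 → ℝ :=
  fun a b => if a = b then (if a = 0 then 1 else -1) else 0

/-- The totally antisymmetric Levi-Civita tensor with all indices down and
`ε₀₁₂₃ = +1`, via the Vandermonde-product formula. -/
def lev : Fin 4 → Fin 4 → Fin 4 → Fin 4 → ℝ :=
  fun a b c d =>
    (((b : ℕ) : ℝ) - ((a : ℕ) : ℝ)) * (((c : ℕ) : ℝ) - ((a : ℕ) : ℝ)) *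
    (((d : ℕ) : ℝ) - ((a : ℕ) : ℝ)) * (((c : ℕ) : ℝ) - ((b : ℕ) : ℝ)) *
    (((d : ℕ) : ℝ) - ((b : ℕ) : ℝ)) * (((d : ℕ) : ℝ) - ((c : ℕ) : ℝ)) / 12

/-- `ε_{ab}{}^{pq}`: the Levi-Civita tensor with its last two indices raised
by the Minkowski metric. -/
def levUp (a b p q : Fin 4) : ℝ := ∑ r, ∑ s, mink p r * mink q s * lev a b r s

/-- The Kronecker delta on `Fin 4`. -/
def kd (a b : Fin 4) : ℝ := if a = b then 1 else 0

/-- Hodge dual `⋆F_{ab} = (1/2) ε_{ab}{}^{pq} F_{pq}` of a rank-2 tensor. -/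
def hodge2 (F : Fin 4 → Fin 4 → ℝ) (a b : Fin 4) : ℝ :=
  (1/2) * ∑ p, ∑ q, levUp a b p q * F p q

/-- Left Hodge dual `←⋆X_{abcd} = (1/2) ε_{ab}{}^{pq} X_{pqcd}`. -/
def leftD (X : Fin 4 → Fin 4 → Fin 4 → Fin 4 → ℝ) (a b c d : Fin 4) : ℝ :=
  (1/2) * ∑ p, ∑ q, levUp a b p q * X p q c d

/-- Right Hodge dual `→⋆X_{abcd} = (1/2) ε_{cd}{}^{pq} X_{abpq}`. -/
def rightD (X : Fin 4 → Fin 4 → Fin 4 → Fin 4 → ℝ) (a b c d : Fin 4) : ℝ :=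
  (1/2) * ∑ p, ∑ q, levUp c d p q * X a b p q

/-- Double Hodge dual `⋆⋆X_{abcd} = (1/4) ε_{ab}{}^{pq} ε_{cd}{}^{rs} X_{pqrs}`. -/
def dblD (X : Fin 4 → Fin 4 → Fin 4 → Fin 4 → ℝ) (a b c d : Fin 4) : ℝ :=
  (1/4) * ∑ p, ∑ q, ∑ r, ∑ s, levUp a b p q * levUp c d r s * X p q r s

/-- First trace `X_{ac} = η^{bd} X_{abcd}` of a (2,2) double form. -/
def tr1 (X : Fin 4 → Fin 4 → Fin 4 → Fin 4 → ℝ) (a c : Fin 4) : ℝ :=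
  ∑ b, ∑ d, mink b d * X a b c d

/-- Second trace `X = η^{ac} X_{ac}` of a (2,2) double form. -/
def tr2 (X : Fin 4 → Fin 4 → Fin 4 → Fin 4 → ℝ) : ℝ :=
  ∑ a, ∑ c, mink a c * tr1 X a c

/-- Hatted (trace-free) tensor `X̂_{ab} = X_{ab} − (1/4) X η_{ab}`. -/
def hatT (X : Fin 4 → Fin 4 → Fin 4 → Fin 4 → ℝ) (a b : Fin 4) : ℝ :=
  tr1 X a b - (1/4) * tr2 X * mink a b

/-- Rank-2 tensor with both indices raised by the Minkowski metric. -/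
def up2 (F : Fin 4 → Fin 4 → ℝ) (a b : Fin 4) : ℝ :=
  ∑ p, ∑ q, mink a p * mink b q * F p q

/-- Rank-4 tensor with all indices raised by the Minkowski metric. -/
def up4 (X : Fin 4 → Fin 4 → Fin 4 → Fin 4 → ℝ) (a b c d : Fin 4) : ℝ :=
  ∑ p, ∑ q, ∑ r, ∑ s, mink a p * mink b q * mink c r * mink d s * X p q r s

/-- Raising the last two indices of the Levi-Civita tensor only changes signs. -/
lemma levUp_eq (a b p q : Fin 4) :
    levUp a b p q = mink p p * mink q q * lev a b p q := by
  have collapse (i : Fin 4) (f : Fin 4 → ℝ) : ∑ j, mink i j * f j = mink i i * f i :=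
    Finset.sum_eq_single i (fun j _ hj => by simp [mink, hj.symm]) (by simp)
  simp only [levUp, mul_assoc, ← Finset.mul_sum, collapse]

/-- The Hodge dual of an antisymmetric rank-2 tensor, in components. -/
lemma hodge2_eq_of_antisymm (F : Fin 4 → Fin 4 → ℝ) (hF : ∀ a b, F a b = -F b a)
    (a b : Fin 4) :
    hodge2 F a b =
      !![0, F 2 3, -F 1 3, F 1 2;
         -F 2 3, 0, -F 0 3, F 0 2;
         F 1 3, F 0 3, 0, -F 0 1;
         -F 1 2, -F 0 2, F 0 1, 0] a b := by
  have h10 := hF 1 0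
  have h20 := hF 2 0
  have h30 := hF 3 0
  have h21 := hF 2 1
  have h31 := hF 3 1
  have h32 := hF 3 2
  fin_cases a <;> fin_cases b <;>
    simp [hodge2, levUp_eq, lev, mink, Fin.sum_univ_four, h10, h20, h30, h21, h31, h32] <;>
    ring

/-- The double Hodge dual is the Hodge dual in each pair of indices. -/
lemma dblD_eq_hodge2_hodge2 (X : Fin 4 → Fin 4 → Fin 4 → Fin 4 → ℝ) (a b c d : Fin 4) :
    dblD X a b c d = hodge2 (fun p q => hodge2 (X p q) c d) a b := by
  simp only [dblD, hodge2, Finset.mul_sum]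
  refine Finset.sum_congr rfl fun p _ => Finset.sum_congr rfl fun q _ =>
    Finset.sum_congr rfl fun r _ => Finset.sum_congr rfl fun s _ => ?_
  ring

lemma tr1_eq (X : Fin 4 → Fin 4 → Fin 4 → Fin 4 → ℝ) (a c : Fin 4) :
    tr1 X a c = X a 0 c 0 - X a 1 c 1 - X a 2 c 2 - X a 3 c 3 := by
  simp [tr1, mink, Fin.sum_univ_four]
  ring

lemma tr2_eq (X : Fin 4 → Fin 4 → Fin 4 → Fin 4 → ℝ) :
    tr2 X = tr1 X 0 0 - tr1 X 1 1 - tr1 X 2 2 - tr1 X 3 3 := by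
  simp [tr2, mink, Fin.sum_univ_four]
  ring

set_option maxHeartbeats 4000000 in
/-- Generalised Ruse–Lanczos identity for an arbitrary (2,2) double form on
4-dimensional Minkowski space. -/
theorem ruse_lanczos (X : Fin 4 → Fin 4 → Fin 4 → Fin 4 → ℝ)
    (h1 : ∀ a b c d, X a b c d = -X b a c d)
    (h2 : ∀ a b c d, X a b c d = -X a b d c) :
    ∀ a b c d, dblD X a b c d + X c d a b =
      mink a c * hatT X d b - mink a d * hatT X c b +
      mink b d * hatT X c a - mink b c * hatT X d a := by
  have hz1 (a c d) : X a a c d = 0 := by linarith [h1 a a c d]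
  have hz2 (a b c) : X a b c c = 0 := by linarith [h2 a b c c]
  have l10 := h1 1 0
  have l20 := h1 2 0
  have l30 := h1 3 0
  have l21 := h1 2 1
  have l31 := h1 3 1
  have l32 := h1 3 2
  have r10 (a b) := h2 a b 1 0
  have r20 (a b) := h2 a b 2 0
  have r30 (a b) := h2 a b 3 0
  have r21 (a b) := h2 a b 2 1
  have r31 (a b) := h2 a b 3 1
  have r32 (a b) := h2 a b 3 2
  have hodge_antisymm (c d p q) : hodge2 (X p q) c d = -hodge2 (X q p) c d := by
    simp only [hodge2, h1 p q, mul_neg, Finset.sum_neg_distrib]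
  intro a b c d
  rw [dblD_eq_hodge2_hodge2, hodge2_eq_of_antisymm _ (hodge_antisymm c d)]
  simp only [hodge2_eq_of_antisymm _ (h2 _ _), hatT, tr2_eq, tr1_eq]
  fin_cases a <;> fin_cases b <;> fin_cases c <;> fin_cases d <;>
    simp [mink, hz1, hz2, l10, l20, l30, l21, l31, l32, r10, r20, r30, r21, r31, r32] <;>
    ring
end
end
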